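/- arXiv:2111.08850 — 2 statements merged into one kernel-verified Lean document; each statement's English description precedes it below -/
import Mathlib

section
/- Let 1 ≤ k ≤ n and let U = I₁ × ⋯ × Iₙ ⊆ ℝⁿ be an open box with 0 ∈ Iᵢ for i = 1,…,k. Let π: ℝⁿ → ℝ^{n−k} be the projection onto the last n−k coordinates, and for q = (q₁,…,q_n) ∈ U write q⁰ = (0,…,0,q_{k+1},…,q_n) ∈ U. Let g₁,…,g_m: U → ℝⁿ be smooth vector fields, and define Z̄ᵢ(q) = π(gᵢ(q⁰)) for q ∈ U, i = 1,…,m. Suppose that for each i = 1,…,m and every smooth vector field X: U → ℝⁿ with X(q) ∈ ℝᵏ×{0} for all q ∈ U, there exist a smooth vector field Y: U → ℝⁿ with Y(q) ∈ ℝᵏ×{0} for all q ∈ U and smooth functions c₁,…,c_m: U → ℝ such that [gᵢ, X] = Y + Σⱼ cⱼ gⱼ on U. Then there exist smooth functions λ_{ij}: U → ℝ (i,j = 1,…,m) such that π(gᵢ(q)) = Σⱼ λ_{ij}(q) Z̄ⱼ(q) for all q ∈ U and all i = 1,…,m. -/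
open Set VectorField

/-!
The bracket of `gᵢ` with a constant vertical field `v` is `-Dgᵢ(v)`, so modulo vertical vectors the
hypothesis says that `wᵢ = π ∘ gᵢ` satisfies `Dwᵢ(v) = ∑ⱼ ωᵢⱼ(v) wⱼ` for smooth 1-forms `ωᵢⱼ`. Along
the vertical segment from `q⁰` to `q` this is a linear ODE, whose transport matrix is `λ(q)`.
Solutions of `u' = b u` on `[0, 1]` with `u 0 = u₀` are the solutions of
`(1 - volterra b) u = u₀` in `C([0, 1], W)`, where `1 - volterra b` is invertible because the powers
of the Volterra operator decay like `1 / n!`. Smoothness of `λ` then follows from the smoothness of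
inversion in a Banach algebra and of the superposition operator `f ↦ h ∘ f`.
-/

noncomputable section

universe u v

section Superposition

variable {K : Type*} [TopologicalSpace K] [CompactSpace K]
  {E : Type u} [NormedAddCommGroup E]

section Bilinear

variable (K E) [NormedSpace ℝ E] (G : Type*) [NormedAddCommGroup G] [NormedSpace ℝ G]

/-- Pointwise application of a continuous family of operators to a continuous family of vectors,
as a continuous bilinear map: `t ↦ A t (f t)`. -/
def clmApplyPointwise : C(K, E →L[ℝ] G) →L[ℝ] C(K, E) →L[ℝ] C(K, G) :=
  LinearMap.mkContinuous₂
    (LinearMap.mk₂ ℝ (fun (A : C(K, E →L[ℝ] G)) (f : C(K, E)) ↦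
        (⟨fun t ↦ A t (f t), by fun_prop⟩ : C(K, G)))
      (by intros; ext; simp) (by intros; ext; simp) (by intros; ext; simp) (by intros; ext; simp))
    1 fun A f ↦ by
      refine (ContinuousMap.norm_le _ (by positivity)).2 fun t ↦ ?_
      rw [one_mul]
      exact (A t).le_of_opNorm_le_of_le (A.norm_coe_le_norm t) (f.norm_coe_le_norm t)

variable {K E G}

@[simp]
lemma clmApplyPointwise_apply (A : C(K, E →L[ℝ] G)) (f : C(K, E)) (t : K) :
    clmApplyPointwise K E G A f t = A t (f t) := rfl

end Bilinear

/-- The superposition (Nemytskii) operator `f ↦ h ∘ f` on continuous functions. As `h` is only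
required to be continuous on a set, the value is the junk `0` when `h ∘ f` is not continuous. -/
def superposition {G : Type*} [NormedAddCommGroup G] (h : E → G) (f : C(K, E)) : C(K, G) :=
  ContinuousMap.mkD (h ∘ f) 0

section Continuity

variable {G : Type*} [NormedAddCommGroup G] {h : E → G} {U : Set E}

omit [CompactSpace K] in
lemma superposition_apply (hh : ContinuousOn h U) {f : C(K, E)} (hf : ∀ t, f t ∈ U) (t : K) :
    superposition h f t = h (f t) :=
  ContinuousMap.mkD_apply_of_continuous (hh.comp_continuous f.continuous hf)

variable (K) in
lemma isOpen_setOf_forall_apply_mem (hU : IsOpen U) : IsOpen {f : C(K, E) | ∀ t, f t ∈ U} := by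
  simpa [MapsTo] using ContinuousMap.isOpen_setOfPred_mapsTo (X := K) isCompact_univ hU

lemma continuousOn_superposition (hh : ContinuousOn h U) :
    ContinuousOn (superposition h) {f : C(K, E) | ∀ t, f t ∈ U} := by
  refine ContinuousMap.continuousOn_of_continuousOn_uncurry _ ?_
  have h_eval : ContinuousOn (fun p : C(K, E) × K ↦ h (p.1 p.2))
      ({f | ∀ t, f t ∈ U} ×ˢ univ) :=
    hh.comp (by fun_prop) fun p hp ↦ hp.1 p.2
  exact h_eval.congr fun p hp ↦ superposition_apply hh hp.1 p.2

end Continuity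

variable [NormedSpace ℝ E] {U : Set E}

lemma hasFDerivAt_superposition {G : Type*} [NormedAddCommGroup G] [NormedSpace ℝ G] {h : E → G}
    (hU : IsOpen U) (hh : DifferentiableOn ℝ h U)
    (hh' : ContinuousOn (fderiv ℝ h) U) {f : C(K, E)} (hf : ∀ t, f t ∈ U) :
    HasFDerivAt (superposition h) (clmApplyPointwise K E G (superposition (fderiv ℝ h) f)) f := by
  rw [hasFDerivAt_iff_isLittleO, Asymptotics.isLittleO_iff]
  intro ε hε
  have h_open := isOpen_setOf_forall_apply_mem K hU
  have h_near : ∀ᶠ k in nhds f, (∀ t, k t ∈ U) ∧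
      ‖superposition (fderiv ℝ h) k - superposition (fderiv ℝ h) f‖ < ε := by
    filter_upwards [h_open.mem_nhds hf, ((continuousOn_superposition hh').continuousAt
      (h_open.mem_nhds hf)).eventually (Metric.ball_mem_nhds _ hε)] with k hkU hkε
    exact ⟨hkU, by rwa [← dist_eq_norm]⟩
  obtain ⟨δ, hδ, h_ball⟩ := Metric.eventually_nhds_iff_ball.1 h_near
  have h_fderiv : ∀ t, ∀ x ∈ Metric.ball (f t) δ,
      x ∈ U ∧ ‖fderiv ℝ h x - fderiv ℝ h (f t)‖ ≤ ε := by
    intro t x hx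
    have hk := h_ball (f + ContinuousMap.const K (x - f t)) <| by
      rw [mem_ball_iff_norm, add_sub_cancel_left]
      refine (ContinuousMap.norm_lt_iff _ hδ).2 fun _ ↦ ?_
      exact mem_ball_iff_norm.1 hx
    have hxU : x ∈ U := by simpa using hk.1 t
    refine ⟨hxU, ?_⟩
    have h_at_t := (ContinuousMap.norm_coe_le_norm _ t).trans hk.2.le
    rwa [ContinuousMap.sub_apply, superposition_apply hh' hk.1, superposition_apply hh' hf,
      ContinuousMap.add_apply, ContinuousMap.const_apply, add_sub_cancel] at h_at_t
  filter_upwards [Metric.ball_mem_nhds f hδ] with k hk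
  refine (ContinuousMap.norm_le _ (by positivity)).2 fun t ↦ ?_
  have hkt : ∀ t, k t ∈ Metric.ball (f t) δ :=
    fun t ↦ (ContinuousMap.dist_apply_le_dist t).trans_lt hk
  rw [ContinuousMap.sub_apply, ContinuousMap.sub_apply, clmApplyPointwise_apply,
    superposition_apply hh.continuousOn fun t ↦ (h_fderiv t _ (hkt t)).1,
    superposition_apply hh.continuousOn hf, superposition_apply hh' hf]
  refine ((convex_ball (f t) δ).norm_image_sub_le_of_norm_fderiv_le'
    (fun x hx ↦ hh.differentiableAt (hU.mem_nhds (h_fderiv t x hx).1))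
    (fun x hx ↦ (h_fderiv t x hx).2) (Metric.mem_ball_self hδ) (hkt t)).trans ?_
  gcongr
  exact (k - f).norm_coe_le_norm t

-- The target lives in `max u v` so that the induction can pass from `G` to `E →L[ℝ] G`.
lemma contDiffOn_superposition {G : Type (max u v)} [NormedAddCommGroup G] [NormedSpace ℝ G]
    {h : E → G} {n : ℕ∞} (hU : IsOpen U) (hh : ContDiffOn ℝ n h U) :
    ContDiffOn ℝ n (superposition h) {f : C(K, E) | ∀ t, f t ∈ U} := by
  refine contDiffOn_iff_forall_nat_le.2 fun m hm ↦ ?_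
  replace hh : ContDiffOn ℝ m h U := hh.of_le (by exact_mod_cast hm)
  clear hm
  induction m generalizing G with
  | zero => exact contDiffOn_zero.2 (continuousOn_superposition (contDiffOn_zero.1 hh))
  | succ m ih =>
    push_cast at hh ⊢
    rw [contDiffOn_succ_iff_fderiv_of_isOpen hU] at hh
    rw [contDiffOn_succ_iff_fderiv_of_isOpen (isOpen_setOf_forall_apply_mem K hU)]
    have h_deriv : ∀ f ∈ {f : C(K, E) | ∀ t, f t ∈ U}, HasFDerivAt (superposition h) _ f :=
      fun f hf ↦ hasFDerivAt_superposition hU hh.1 hh.2.2.continuousOn hf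
    refine ⟨fun f hf ↦ (h_deriv f hf).differentiableAt.differentiableWithinAt, by simp, ?_⟩
    have h_smooth := (clmApplyPointwise K E G).contDiff.comp_contDiffOn (ih hh.2.2)
    exact h_smooth.congr fun f hf ↦ (h_deriv f hf).fderiv

end Superposition

section LinearFlow

open scoped unitInterval

variable {W : Type*} [NormedAddCommGroup W] [NormedSpace ℝ W]

variable (W) in
/-- The primitive vanishing at `0` of a continuous function on the unit interval. -/
def primitiveCLM : C(I, W) →L[ℝ] C(I, W) :=
  LinearMap.mkContinuous
    { toFun f := ⟨fun t ↦ ∫ s in (0 : ℝ)..t, f (projIcc 0 1 zero_le_one s),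
        (intervalIntegral.continuous_primitive
          (fun _ _ ↦ Continuous.intervalIntegrable (by fun_prop) _ _) 0).comp
            continuous_subtype_val⟩
      map_add' f g := by
        ext t
        exact intervalIntegral.integral_add (Continuous.intervalIntegrable (by fun_prop) _ _)
          (Continuous.intervalIntegrable (by fun_prop) _ _)
      map_smul' c f := by ext t; simp } 1 fun f ↦ by
    refine (ContinuousMap.norm_le _ (by positivity)).2 fun t ↦ ?_
    refine (intervalIntegral.norm_integral_le_of_norm_le_const (C := ‖f‖) fun s _ ↦
      f.norm_coe_le_norm _).trans ?_
    rw [sub_zero, abs_of_nonneg t.2.1, mul_comm]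
    exact mul_le_mul_of_nonneg_right t.2.2 (norm_nonneg f)

variable (W) in
/-- The Volterra operator `f ↦ ∫₀ᵗ b(s) f(s) ds` of a path `b` of operators, as a linear function
of `b`. A solution `f` of `f' = b f` is a solution of `(1 - volterra W b) f = f 0`. -/
def volterra : C(I, W →L[ℝ] W) →L[ℝ] C(I, W) →L[ℝ] C(I, W) :=
  (ContinuousLinearMap.compL ℝ _ _ _ (primitiveCLM W)).comp (clmApplyPointwise I W W)

lemma volterra_apply (b : C(I, W →L[ℝ] W)) (f : C(I, W)) (t : I) :
    volterra W b f t =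
      ∫ s in (0 : ℝ)..t, b (projIcc 0 1 zero_le_one s) (f (projIcc 0 1 zero_le_one s)) := rfl

lemma norm_volterra_pow_apply_le (b : C(I, W →L[ℝ] W)) (f : C(I, W)) (n : ℕ) (t : I) :
    ‖(volterra W b ^ n) f t‖ ≤ ‖b‖ ^ n * ‖f‖ / n.factorial * (t : ℝ) ^ n := by
  induction n generalizing t with
  | zero => simpa using f.norm_coe_le_norm t
  | succ n ih =>
    rw [pow_succ', mul_apply_eq_comp, volterra_apply]
    calc _ ≤ ∫ s in (0 : ℝ)..t, ‖b‖ * (‖b‖ ^ n * ‖f‖ / n.factorial * s ^ n) := by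
          refine intervalIntegral.norm_integral_le_of_norm_le t.2.1
            (.of_forall fun s hs ↦ ?_) (Continuous.intervalIntegrable (by fun_prop) _ _)
          have hs' : s ∈ Icc (0 : ℝ) 1 := ⟨hs.1.le, hs.2.trans t.2.2⟩
          rw [projIcc_of_mem _ hs']
          exact (b _).le_of_opNorm_le_of_le (b.norm_coe_le_norm _) (ih ⟨s, hs'⟩)
      _ = _ := by
          simp only [intervalIntegral.integral_const_mul, integral_pow, Nat.factorial_succ]
          push_cast
          field_simp
          ring

lemma norm_volterra_pow_le (b : C(I, W →L[ℝ] W)) (n : ℕ) :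
    ‖volterra W b ^ n‖ ≤ ‖b‖ ^ n / n.factorial := by
  refine ContinuousLinearMap.opNorm_le_bound _ (by positivity) fun f ↦
    (ContinuousMap.norm_le _ (by positivity)).2 fun t ↦ ?_
  calc ‖(volterra W b ^ n) f t‖ ≤ ‖b‖ ^ n * ‖f‖ / n.factorial * (t : ℝ) ^ n :=
        norm_volterra_pow_apply_le b f n t
    _ ≤ ‖b‖ ^ n * ‖f‖ / n.factorial * 1 := by
        gcongr
        exact pow_le_one₀ t.2.1 t.2.2
    _ = ‖b‖ ^ n / n.factorial * ‖f‖ := by ring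

lemma isUnit_one_sub_of_norm_pow_lt_one {R : Type*} [NormedRing R] [HasSummableGeomSeries R]
    {x : R} {n : ℕ} (h : ‖x ^ n‖ < 1) : IsUnit (1 - x) := by
  have h_pow := isUnit_one_sub_of_norm_lt_one h
  rw [← mul_neg_geom_sum] at h_pow
  exact ((Commute.isUnit_mul_iff
    ((mul_neg_geom_sum x n).trans (geom_sum_mul_neg x n).symm)).1 h_pow).1

variable [CompleteSpace W]

lemma isUnit_one_sub_volterra (b : C(I, W →L[ℝ] W)) : IsUnit (1 - volterra W b) := by
  obtain ⟨n, hn⟩ := ((FloorSemiring.tendsto_pow_div_factorial_atTop ‖b‖).eventually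
    (gt_mem_nhds zero_lt_one)).exists
  exact isUnit_one_sub_of_norm_pow_lt_one (R := C(I, W) →L[ℝ] C(I, W))
    ((norm_volterra_pow_le b n).trans_lt hn)

/-- The time-one flow of the linear equation `u' = b u` on the unit interval: it maps the initial
value of a solution to its final value. -/
def linearFlow (b : C(I, W →L[ℝ] W)) : W →L[ℝ] W :=
  (ContinuousMap.evalCLM ℝ (1 : I)).comp
    ((Ring.inverse (1 - volterra W b)).comp (ContinuousLinearMap.const ℝ I))

lemma contDiff_linearFlow {n : WithTop ℕ∞} :
    ContDiff ℝ n (linearFlow : C(I, W →L[ℝ] W) → W →L[ℝ] W) := by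
  have h_sub : ContDiff ℝ n fun b ↦ 1 - volterra W b := by fun_prop
  have h_inv : ContDiff ℝ n fun b ↦ Ring.inverse (1 - volterra W b) := by
    refine contDiff_iff_contDiffAt.2 fun b ↦ ?_
    obtain ⟨u, hu⟩ := isUnit_one_sub_volterra b
    have h_inv_at := contDiffAt_ringInverse ℝ (n := n) (R := C(I, W) →L[ℝ] C(I, W)) u
    rw [hu] at h_inv_at
    exact h_inv_at.comp b h_sub.contDiffAt
  exact contDiff_const.clm_comp (h_inv.clm_comp contDiff_const)

lemma linearFlow_apply_of_hasDerivWithinAt {b : C(I, W →L[ℝ] W)} {u : ℝ → W}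
    (hu : ∀ s : I, HasDerivWithinAt u (b s (u s)) I s) : linearFlow b (u 0) = u 1 := by
  have hu_cont : ContinuousOn u I := fun s hs ↦ (hu ⟨s, hs⟩).continuousWithinAt
  let f : C(I, W) := ⟨fun t ↦ u t, hu_cont.domRestrict⟩
  have h_volterra : (1 - volterra W b) f = ContinuousLinearMap.const ℝ I (u 0) := by
    ext t
    have h_ftc : volterra W b f t = u t - u 0 := by
      rw [volterra_apply]
      refine intervalIntegral.integral_eq_sub_of_hasDerivAt_of_le t.2.1
        (hu_cont.mono (Icc_subset_Icc_right t.2.2)) (fun s hs ↦ ?_)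
        (Continuous.intervalIntegrable (by fun_prop) _ _)
      have hs1 : s < 1 := hs.2.trans_le t.2.2
      rw [projIcc_of_mem _ ⟨hs.1.le, hs1.le⟩]
      exact (hu ⟨s, hs.1.le, hs1.le⟩).hasDerivAt (Icc_mem_nhds hs.1 hs1)
    change u t - volterra W b f t = u 0
    rw [h_ftc, sub_sub_cancel]
  calc linearFlow b (u 0) = (Ring.inverse (1 - volterra W b) * (1 - volterra W b)) f 1 := by
        rw [mul_apply_eq_comp, h_volterra]
        rfl
    _ = u 1 := by
        rw [Ring.inverse_mul_cancel _ (isUnit_one_sub_volterra b)]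
        rfl

end LinearFlow

section Transport

open scoped unitInterval

variable {E : Type u} [NormedAddCommGroup E] [NormedSpace ℝ E]
  {W : Type v} [NormedAddCommGroup W] [NormedSpace ℝ W]

variable (E) in
/-- The affine path `t ↦ a + t (b - a)` from `a` to `b`, as a linear function of `(a, b)`. -/
def segmentPath : E × E →L[ℝ] C(I, E) where
  toFun x := ⟨fun t ↦ AffineMap.lineMap x.1 x.2 (t : ℝ), by fun_prop⟩
  map_add' x y := by ext t; simp [AffineMap.lineMap_apply_module]; module
  map_smul' c x := by ext t; simp [AffineMap.lineMap_apply_module]; module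
  cont := ContinuousMap.continuous_of_continuous_uncurry _ <| by
    simp only [AffineMap.lineMap_apply_module, Function.uncurry_def, ContinuousMap.coe_mk]
    fun_prop

lemma segmentPath_apply (x : E × E) (t : I) :
    segmentPath E x t = AffineMap.lineMap x.1 x.2 (t : ℝ) := rfl

lemma segmentPath_apply_mem_segment (x : E × E) (t : I) :
    segmentPath E x t ∈ segment ℝ x.1 x.2 :=
  segment_eq_image_lineMap ℝ x.1 x.2 ▸ mem_image_of_mem _ t.2

/-- The pullback of an operator-valued 1-form `B` to the segment from `x.1` to `x.2`,
i.e. `t ↦ B(γ(t))(γ'(t))` for the affine parametrisation `γ`. -/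
def segmentPullback (B : E → E →L[ℝ] W →L[ℝ] W) (x : E × E) : C(I, W →L[ℝ] W) :=
  clmApplyPointwise I E (W →L[ℝ] W) (superposition B (segmentPath E x))
    (ContinuousLinearMap.const ℝ I (x.2 - x.1))

variable {U : Set E} {B : E → E →L[ℝ] W →L[ℝ] W}

lemma segmentPullback_apply (hB : ContinuousOn B U) {x : E × E} (hx : segment ℝ x.1 x.2 ⊆ U)
    (t : I) :
    segmentPullback B x t = B (AffineMap.lineMap x.1 x.2 (t : ℝ)) (x.2 - x.1) := by
  rw [segmentPullback, clmApplyPointwise_apply,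
    superposition_apply hB fun t ↦ hx (segmentPath_apply_mem_segment x t)]
  rfl

lemma contDiffOn_segmentPullback {n : ℕ∞} (hU : IsOpen U) (hB : ContDiffOn ℝ n B U) :
    ContDiffOn ℝ n (segmentPullback B) {x | segment ℝ x.1 x.2 ⊆ U} := by
  have h_coeff : ContDiffOn ℝ n (fun x ↦ superposition B (segmentPath E x))
      {x | segment ℝ x.1 x.2 ⊆ U} :=
    (contDiffOn_superposition hU hB).comp (segmentPath E).contDiff.contDiffOn
      fun x hx t ↦ hx (segmentPath_apply_mem_segment x t)
  exact ((clmApplyPointwise I E (W →L[ℝ] W)).contDiff.comp_contDiffOn h_coeff).clm_apply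
    ((ContinuousLinearMap.const ℝ I).contDiff.comp (contDiff_snd.sub contDiff_fst)).contDiffOn

variable [CompleteSpace W]

lemma linearFlow_segmentPullback_apply (hU : IsOpen U) (hB : ContinuousOn B U) {w : E → W}
    (hw : DifferentiableOn ℝ w U) {x : E × E} (hx : segment ℝ x.1 x.2 ⊆ U)
    (hwB : ∀ y ∈ segment ℝ x.1 x.2, fderiv ℝ w y (x.2 - x.1) = B y (x.2 - x.1) (w y)) :
    linearFlow (segmentPullback B x) (w x.1) = w x.2 := by
  have h_deriv : ∀ t : I, HasDerivWithinAt (fun s : ℝ ↦ w (AffineMap.lineMap x.1 x.2 s))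
      (segmentPullback B x t (w (AffineMap.lineMap x.1 x.2 (t : ℝ)))) I t := by
    intro t
    have ht := segmentPath_apply_mem_segment x t
    rw [segmentPath_apply] at ht
    rw [segmentPullback_apply hB hx, ← hwB _ ht]
    exact ((hw.differentiableAt (hU.mem_nhds (hx ht))).hasFDerivAt.comp_hasDerivAt _
      AffineMap.hasDerivAt_lineMap).hasDerivWithinAt
  simpa using linearFlow_apply_of_hasDerivWithinAt h_deriv

end Transport

section MatrixConnection

variable {ι : Type*} [Fintype ι] [DecidableEq ι]
  {E : Type*} [NormedAddCommGroup E] [NormedSpace ℝ E]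

/-- The `End(ℝ^ι)`-valued 1-form with matrix entries `ω i j`, so that `dw = matrixConnection ω w`
is the system `dwᵢ = ∑ⱼ ωᵢⱼ wⱼ`. -/
def matrixConnection (ω : ι → ι → E → E →L[ℝ] ℝ) (x : E) : E →L[ℝ] (ι → ℝ) →L[ℝ] (ι → ℝ) :=
  ∑ i, ∑ j, (ω i j x).smulRight
    ((ContinuousLinearMap.proj (R := ℝ) (φ := fun _ : ι ↦ ℝ) j).smulRight (Pi.single i (1 : ℝ)))

variable {ω : ι → ι → E → E →L[ℝ] ℝ}

lemma matrixConnection_apply (x v : E) (u : ι → ℝ) (i : ι) :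
    matrixConnection ω x v u i = ∑ j, ω i j x v * u j := by
  simp only [matrixConnection, sum_apply, Finset.sum_apply, ContinuousLinearMap.smulRight_apply,
    smul_apply, ContinuousLinearMap.proj_apply, Pi.smul_apply, Pi.single_apply, smul_eq_mul]
  rw [Finset.sum_eq_single i (by simp +contextual [eq_comm]) (by simp)]
  simp

/-- The matrix of the transport from `x.1` to `x.2` along the segment joining them, for the system
`dwᵢ = ∑ⱼ ωᵢⱼ wⱼ`. -/
def transportMatrix (ω : ι → ι → E → E →L[ℝ] ℝ) (x : E × E) : Matrix ι ι ℝ :=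
  (linearFlow (segmentPullback (matrixConnection ω) x)).toLinearMap.toMatrix'

variable {U : Set E}

lemma contDiffOn_matrixConnection {n : WithTop ℕ∞} (hω : ∀ i j, ContDiffOn ℝ n (ω i j) U) :
    ContDiffOn ℝ n (matrixConnection ω) U :=
  ContDiffOn.sum fun i _ ↦ ContDiffOn.sum fun j _ ↦ (hω i j).smulRight contDiffOn_const

lemma contDiffOn_transportMatrix {n : ℕ∞} (hU : IsOpen U)
    (hω : ∀ i j, ContDiffOn ℝ n (ω i j) U) (i j : ι) :
    ContDiffOn ℝ n (fun x ↦ transportMatrix ω x i j) {x | segment ℝ x.1 x.2 ⊆ U} := by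
  simp only [transportMatrix, LinearMap.toMatrix'_apply]
  have h_flow := contDiff_linearFlow.comp_contDiffOn
    (contDiffOn_segmentPullback hU (contDiffOn_matrixConnection hω))
  exact contDiffOn_pi.1 (h_flow.clm_apply contDiffOn_const) i

variable {x : E × E}

lemma transportMatrix_mulVec (hU : IsOpen U) (hω : ∀ i j, ContinuousOn (ω i j) U) {w : ι → E → ℝ}
    (hw : ∀ i, DifferentiableOn ℝ (w i) U) (hx : segment ℝ x.1 x.2 ⊆ U)
    (hwω : ∀ i, ∀ y ∈ segment ℝ x.1 x.2,
      fderiv ℝ (w i) y (x.2 - x.1) = ∑ j, ω i j y (x.2 - x.1) * w j y) :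
    (transportMatrix ω x).mulVec (fun j ↦ w j x.1) = fun i ↦ w i x.2 := by
  rw [transportMatrix, LinearMap.toMatrix'_mulVec]
  refine linearFlow_segmentPullback_apply (w := fun y i ↦ w i y) hU
    (contDiffOn_zero.1 (contDiffOn_matrixConnection fun i j ↦ contDiffOn_zero.2 (hω i j)))
    (differentiableOn_pi.2 hw) hx fun y hy ↦ ?_
  ext i
  rw [fderiv_pi fun j ↦ (hw j).differentiableAt (hU.mem_nhds (hx hy)), matrixConnection_apply]
  exact hwω i y hy

variable {F : Type*} [NormedAddCommGroup F] [NormedSpace ℝ F]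

lemma sum_transportMatrix_smul (hU : IsOpen U) (hω : ∀ i j, ContinuousOn (ω i j) U)
    {w : ι → E → F} (hw : ∀ i, DifferentiableOn ℝ (w i) U) (hx : segment ℝ x.1 x.2 ⊆ U)
    (hwω : ∀ i, ∀ y ∈ segment ℝ x.1 x.2,
      fderiv ℝ (w i) y (x.2 - x.1) = ∑ j, ω i j y (x.2 - x.1) • w j y) (i : ι) :
    ∑ j, transportMatrix ω x i j • w j x.1 = w i x.2 := by
  refine (SeparatingDual.eq_iff_forall_dual_eq (R := ℝ)).2 fun φ ↦ ?_
  have h_scalar := transportMatrix_mulVec hU hω (w := fun j y ↦ φ (w j y))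
    (fun j ↦ φ.differentiable.comp_differentiableOn (hw j)) hx fun j y hy ↦ by
      have h_at := (hw j).differentiableAt (hU.mem_nhds (hx hy))
      rw [fderiv_fun_comp y φ.differentiableAt h_at, φ.fderiv, ContinuousLinearMap.comp_apply,
        hwω j y hy]
      simp only [map_sum, map_smul, smul_eq_mul]
  simpa [Matrix.mulVec, dotProduct] using congrFun h_scalar i

end MatrixConnection

section ConnectionForm

variable {ι : Type*} [Fintype ι] {E F M : Type*} [NormedAddCommGroup E] [NormedSpace ℝ E]
  [AddCommGroup F] [Module ℝ F]
  [NormedAddCommGroup M] [NormedSpace ℝ M] {n : WithTop ℕ∞} {U : Set M}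

lemma exists_contDiffOn_form_eq_sum_smul {V : Submodule ℝ E} [FiniteDimensional ℝ V]
    {A : M → E →ₗ[ℝ] F} {w : ι → M → F}
    (hA : ∀ v ∈ V, ∃ c : ι → M → ℝ, (∀ j, ContDiffOn ℝ n (c j) U) ∧
      ∀ x ∈ U, A x v = ∑ j, c j x • w j x) :
    ∃ ω : ι → M → E →L[ℝ] ℝ, (∀ j, ContDiffOn ℝ n (ω j) U) ∧
      ∀ x ∈ U, ∀ v ∈ V, A x v = ∑ j, ω j x v • w j x := by
  let b := Module.finBasis ℝ V
  obtain ⟨P, hP⟩ := Submodule.ClosedComplemented.of_finiteDimensional V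
  choose c hc hcA using fun l ↦ hA (b l) (b l).2
  refine ⟨fun j x ↦ ∑ l, c l j x • (b.coord l).toContinuousLinearMap.comp P,
    fun j ↦ ContDiffOn.sum fun l _ ↦ (hc l j).smul contDiffOn_const, fun x hx v hv ↦ ?_⟩
  have hv_sum : v = ∑ l, b.repr ⟨v, hv⟩ l • (b l : E) := by
    simpa only [map_sum, map_smul, Submodule.subtype_apply] using
      congrArg V.subtype (b.sum_repr ⟨v, hv⟩).symm
  calc A x v = ∑ l, b.repr ⟨v, hv⟩ l • ∑ j, c l j x • w j x := by
        conv_lhs => rw [hv_sum]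
        simp only [map_sum, map_smul, hcA _ x hx]
    _ = ∑ j, ∑ l, b.repr ⟨v, hv⟩ l • c l j x • w j x := by
        simp only [Finset.smul_sum]
        exact Finset.sum_comm
    _ = _ := by
        simp [Finset.sum_smul, smul_smul, mul_comm, hP ⟨v, hv⟩]

end ConnectionForm

theorem parallel_sections_span_projection_general
    {E F : Type*} [NormedAddCommGroup E] [NormedSpace ℝ E] [NormedAddCommGroup F] [NormedSpace ℝ F]
    {ι : Type*} [Fintype ι] {n : ℕ∞} {U : Set E} (hU : IsOpen U)
    {π : E →L[ℝ] F} [FiniteDimensional ℝ π.ker]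
    {p : E → E} (hp : ContDiffOn ℝ n p U) (hpU : ∀ q ∈ U, segment ℝ (p q) q ⊆ U)
    (hπp : ∀ q ∈ U, π (p q) = π q)
    {g : ι → E → E} (hg : ∀ i, DifferentiableOn ℝ (g i) U)
    (h_bracket : ∀ i, ∀ v ∈ π.ker, ∃ (Y : E → E) (c : ι → E → ℝ),
      (∀ q ∈ U, Y q ∈ π.ker) ∧ (∀ j, ContDiffOn ℝ n (c j) U) ∧
      ∀ q ∈ U, lieBracketWithin ℝ (g i) (fun _ ↦ v) U q = Y q + ∑ j, c j q • g j q) :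
    ∃ lam : ι → ι → E → ℝ, (∀ i j, ContDiffOn ℝ n (lam i j) U) ∧
      ∀ q ∈ U, ∀ i, π (g i q) = ∑ j, lam i j q • π (g j (p q)) := by
  classical
  have h_form : ∀ i, ∃ ω : ι → E → E →L[ℝ] ℝ, (∀ j, ContDiffOn ℝ n (ω j) U) ∧
      ∀ q ∈ U, ∀ v ∈ π.ker, π (fderiv ℝ (g i) q v) = ∑ j, ω j q v • π (g j q) := by
    refine fun i ↦ exists_contDiffOn_form_eq_sum_smul
      (A := fun q ↦ (π ∘L fderiv ℝ (g i) q).toLinearMap) fun v hv ↦ ?_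
    obtain ⟨Y, c, hY, hc, h⟩ := h_bracket i v hv
    refine ⟨fun j q ↦ -c j q, fun j ↦ (hc j).neg, fun q hq ↦ ?_⟩
    have hπY : π (Y q) = 0 := hY q hq
    have h_eq := congrArg (fun y ↦ -π y) (h q hq)
    rw [lieBracketWithin_of_isOpen hU hq] at h_eq
    simpa [lieBracket, hπY] using h_eq
  choose ω hω h_deriv using h_form
  refine ⟨fun i j q ↦ transportMatrix ω (p q, q) i j, fun i j ↦
    (contDiffOn_transportMatrix hU hω i j).comp (hp.prodMk contDiffOn_id) hpU, fun q hq i ↦ ?_⟩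
  refine (sum_transportMatrix_smul (x := (p q, q)) (w := fun j y ↦ π (g j y)) hU
    (fun i j ↦ (hω i j).continuousOn)
    (fun j ↦ π.differentiable.comp_differentiableOn (hg j)) (hpU q hq) (fun j y hy ↦ ?_) i).symm
  rw [fderiv_fun_comp y π.differentiableAt ((hg j).differentiableAt (hU.mem_nhds (hpU q hq hy))),
    π.fderiv]
  exact h_deriv j y (hpU q hq hy) (q - p q) (by simp [hπp q hq])

section Coordinates

variable {n k : ℕ}

/-- The projection of `ℝⁿ` onto its last `n - k` coordinates. -/
def lastCoords (hkn : k ≤ n) : (Fin n → ℝ) →L[ℝ] (Fin (n - k) → ℝ) :=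
  .pi fun j ↦ .proj (Fin.cast (Nat.add_sub_cancel' hkn) (Fin.natAdd k j))

lemma mem_ker_lastCoords {hkn : k ≤ n} {v : Fin n → ℝ} :
    v ∈ (lastCoords hkn).ker ↔ ∀ j : Fin n, k ≤ (j : ℕ) → v j = 0 := by
  refine ⟨fun hv j hj ↦ ?_, fun hv ↦ funext fun j ↦ hv _ (by simp)⟩
  have h_coord := congrFun hv ⟨j - k, by omega⟩
  simpa [lastCoords, Nat.add_sub_cancel' hj] using h_coord

variable (n k) in
/-- The endomorphism `q ↦ q⁰` of `ℝⁿ` that replaces the first `k` coordinates by `0`. -/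
def zeroFirstCoords : (Fin n → ℝ) →L[ℝ] (Fin n → ℝ) :=
  .pi fun i ↦ if (i : ℕ) < k then 0 else .proj i

lemma zeroFirstCoords_apply (q : Fin n → ℝ) (i : Fin n) :
    zeroFirstCoords n k q i = if (i : ℕ) < k then 0 else q i := by
  simp only [zeroFirstCoords, ContinuousLinearMap.pi_apply]
  split_ifs <;> rfl

lemma zeroFirstCoords_mem_pi {I : Fin n → Set ℝ} (hI : ∀ i : Fin n, (i : ℕ) < k → (0 : ℝ) ∈ I i)
    {q : Fin n → ℝ} (hq : q ∈ univ.pi I) : zeroFirstCoords n k q ∈ univ.pi I := by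
  intro i _
  rw [zeroFirstCoords_apply]
  split_ifs with hi
  exacts [hI i hi, hq i trivial]

lemma lastCoords_zeroFirstCoords (hkn : k ≤ n) (q : Fin n → ℝ) :
    lastCoords hkn (zeroFirstCoords n k q) = lastCoords hkn q := by
  ext j
  simp [lastCoords, zeroFirstCoords_apply]

end Coordinates

end

theorem parallel_sections_span_projection
    (n k m : ℕ) (hk1 : 1 ≤ k) (hkn : k ≤ n)
    (I : Fin n → Set ℝ) (hIopen : ∀ i, IsOpen (I i)) (hIconv : ∀ i, Convex ℝ (I i))
    (hI0 : ∀ i : Fin n, (i : ℕ) < k → (0 : ℝ) ∈ I i)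
    (U : Set (Fin n → ℝ)) (hU : U = Set.pi Set.univ I)
    (g : Fin m → (Fin n → ℝ) → (Fin n → ℝ))
    (hg : ∀ i, ContDiffOn ℝ (⊤ : ℕ∞) (g i) U)
    (π : (Fin n → ℝ) → (Fin (n - k) → ℝ))
    (hπ : ∀ x j, π x j = x (Fin.cast (Nat.add_sub_cancel' hkn) (Fin.natAdd k j)))
    (proj0 : (Fin n → ℝ) → (Fin n → ℝ))
    (hproj0 : ∀ q i, proj0 q i = if (i : ℕ) < k then 0 else q i)
    (Z : Fin m → (Fin n → ℝ) → (Fin (n - k) → ℝ))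
    (hZ : ∀ i q, Z i q = π (g i (proj0 q)))
    (hyp : ∀ i : Fin m, ∀ X : (Fin n → ℝ) → (Fin n → ℝ),
      ContDiffOn ℝ (⊤ : ℕ∞) X U → (∀ q ∈ U, ∀ j : Fin n, k ≤ (j : ℕ) → X q j = 0) →
      ∃ (Y : (Fin n → ℝ) → (Fin n → ℝ)) (c : Fin m → (Fin n → ℝ) → ℝ),
        ContDiffOn ℝ (⊤ : ℕ∞) Y U ∧ (∀ q ∈ U, ∀ j : Fin n, k ≤ (j : ℕ) → Y q j = 0) ∧
        (∀ j, ContDiffOn ℝ (⊤ : ℕ∞) (c j) U) ∧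
        ∀ q ∈ U, lieBracketWithin ℝ (g i) X U q = Y q + ∑ j, c j q • g j q) :
    ∃ lam : Fin m → Fin m → (Fin n → ℝ) → ℝ,
      (∀ i j, ContDiffOn ℝ (⊤ : ℕ∞) (lam i j) U) ∧
      ∀ q ∈ U, ∀ i, π (g i q) = ∑ j, lam i j q • Z j q := by
  obtain rfl : π = lastCoords hkn := funext fun x ↦ funext (hπ x)
  obtain rfl : proj0 = zeroFirstCoords n k := by
    ext q i
    rw [hproj0, zeroFirstCoords_apply]
  subst hU
  simp only [hZ]
  refine parallel_sections_span_projection_general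
    (isOpen_set_pi finite_univ fun i _ ↦ hIopen i) (zeroFirstCoords n k).contDiff.contDiffOn
    (fun q hq ↦ (convex_pi fun i _ ↦ hIconv i).segment_subset (zeroFirstCoords_mem_pi hI0 hq) hq)
    (fun q _ ↦ lastCoords_zeroFirstCoords hkn q) (fun i ↦ (hg i).differentiableOn (by simp))
    fun i v hv ↦ ?_
  obtain ⟨Y, c, -, hY, hc, h⟩ :=
    hyp i (fun _ ↦ v) contDiffOn_const fun _ _ ↦ mem_ker_lastCoords.1 hv
  exact ⟨Y, c, fun q hq ↦ mem_ker_lastCoords.2 (hY q hq), hc, h⟩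
end

section
/- Let 1 ≤ k ≤ n, let U = I₁ × ⋯ × Iₙ ⊆ ℝⁿ be an open box with 0 ∈ Iᵢ for i = 1,…,k, and let m ≥ 1. Let Z₁,…,Z_m: U → ℝ^{n−k} be smooth maps each of which depends only on the coordinates x_{k+1},…,x_n, and let α_{ij}: U → ℝ (1 ≤ i ≤ k, 1 ≤ j ≤ m) be smooth functions satisfying Σ_{l=1}^m (∂α_{il}/∂x_j)(x) Z_l(x) = Σ_{l=1}^m (∂α_{jl}/∂x_i)(x) Z_l(x) for all x ∈ U and all 1 ≤ i, j ≤ k. Then there exist smooth functions β₁,…,β_m: U → ℝ such that Σ_{j=1}^m (∂β_j/∂x_i)(x) Z_j(x) = Σ_{j=1}^m α_{ij}(x) Z_j(x) for all x ∈ U and all 1 ≤ i ≤ k. -/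
open Set

/-!
On a fibre, where the coordinates `x_{k+1}, …, x_n` are frozen, the vectors `Z l` are constant,
and the compatibility condition says exactly that the vector-valued 1-form
`∑ i, (∑ l, α i l • Z l) dx i` is closed there. By the Poincaré lemma it has the primitive obtained
by radial integration from the point of the fibre with `x_1 = ⋯ = x_k = 0`. Radial integration is
linear, so this primitive is `∑ l, β l • Z l`, where `β l` is the radial integral of
`∑ i, α i l dx i`; the latter form need not be closed. Since `Z` does not enter `β l`, it is smooth
in all the variables, as a parametric integral of smooth functions.
-/

open Topology
open scoped ContDiff

section ParametricIntegral

variable {E F : Type*} [NormedAddCommGroup E] [NormedSpace ℝ E]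
  [NormedAddCommGroup F] [NormedSpace ℝ F] {a b : ℝ} {U : Set E}

theorem hasFDerivAt_intervalIntegral_of_continuousOn {f : E → ℝ → F} {f' : E → ℝ → E →L[ℝ] F}
    (hU : IsOpen U) (hf : ∀ x ∈ U, ContinuousOn (f x) (uIcc a b))
    (hf' : ContinuousOn (Function.uncurry f') (U ×ˢ uIcc a b))
    (hderiv : ∀ x ∈ U, ∀ t ∈ uIcc a b, HasFDerivAt (f · t) (f' x t) x) {x₀ : E} (hx₀ : x₀ ∈ U) :
    HasFDerivAt (fun x ↦ ∫ t in a..b, f x t) (∫ t in a..b, f' x₀ t) x₀ := by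
  have hslice : ContinuousOn (f' x₀) (uIcc a b) :=
    hf'.comp (f := fun t ↦ (x₀, t)) (by fun_prop) fun t ht ↦ ⟨hx₀, ht⟩
  obtain ⟨C, hC⟩ := isCompact_uIcc.exists_bound_of_continuousOn hslice
  have hbound : ∀ᶠ x in 𝓝 x₀, ∀ t ∈ uIcc a b, ‖f' x t‖ < C + 1 := by
    refine (isCompact_uIcc.eventually_forall_of_forall_eventually
      (P := fun x t ↦ t ∈ uIcc a b → ‖f' x t‖ < C + 1) fun t ht ↦ ?_).mono
      fun x hx t ht ↦ hx t ht ht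
    have hlt : ∀ᶠ p in 𝓝[U ×ˢ uIcc a b] (x₀, t), ‖Function.uncurry f' p‖ < C + 1 :=
      (hf' (x₀, t) ⟨hx₀, ht⟩).norm.eventually_lt_const ((hC t ht).trans_lt (lt_add_one C))
    filter_upwards [eventually_nhdsWithin_iff.1 hlt,
      continuousAt_fst.preimage_mem_nhds (hU.mem_nhds hx₀)] with p hp hpU hpt
    exact hp ⟨hpU, hpt⟩
  refine intervalIntegral.hasFDerivAt_integral_of_dominated_of_fderiv_le
    (bound := fun _ ↦ C + 1) (Filter.inter_mem (hU.mem_nhds hx₀) hbound)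
    ?_ (hf x₀ hx₀).intervalIntegrable (hslice.mono uIoc_subset_uIcc |>.aestronglyMeasurable
      measurableSet_uIoc) ?_ intervalIntegrable_const ?_
  · filter_upwards [hU.mem_nhds hx₀] with x hx
    exact ((hf x hx).mono uIoc_subset_uIcc).aestronglyMeasurable measurableSet_uIoc
  · exact .of_forall fun t ht x hx ↦ (hx.2 t (uIoc_subset_uIcc ht)).le
  · exact .of_forall fun t ht x hx ↦ hderiv x hx.1 t (uIoc_subset_uIcc ht)

theorem intervalIntegral_comp_continuousLinearEquiv {G : Type*} [NormedAddCommGroup G]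
    [NormedSpace ℝ G] (L : F ≃L[ℝ] G) (f : ℝ → F) :
    ∫ t in a..b, L (f t) = L (∫ t in a..b, f t) := by
  simp only [intervalIntegral, L.integral_comp_comm, map_sub]

theorem hasFTaylorSeriesUpToOn_intervalIntegral {f : E → ℝ → F}
    {p : E → ℝ → FormalMultilinearSeries ℝ E F} (hU : IsOpen U)
    (hcont : ∀ m, ContinuousOn (fun z : E × ℝ ↦ p z.1 z.2 m) (U ×ˢ uIcc a b))
    (htaylor : ∀ t ∈ uIcc a b, HasFTaylorSeriesUpToOn ∞ (f · t) (p · t) U) :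
    HasFTaylorSeriesUpToOn ∞ (fun x ↦ ∫ t in a..b, f x t) (fun x m ↦ ∫ t in a..b, p x t m) U := by
  refine (hasFTaylorSeriesUpToOn_top_iff' le_rfl).2 ⟨fun x hx ↦ ?_, fun m x hx ↦ ?_⟩
  · let curry₀ := (continuousMultilinearCurryFin0 ℝ E F).toContinuousLinearEquiv
    calc curry₀ (∫ t in a..b, p x t 0)
        = ∫ t in a..b, curry₀ (p x t 0) :=
          (intervalIntegral_comp_continuousLinearEquiv curry₀ _).symm
      _ = ∫ t in a..b, f x t :=
          intervalIntegral.integral_congr fun t ht ↦ (htaylor t ht).zero_eq x hx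
  · let curryLeft : (E [×m + 1]→L[ℝ] F) ≃L[ℝ] (E →L[ℝ] E [×m]→L[ℝ] F) :=
      (continuousMultilinearCurryLeftEquiv ℝ (fun _ : Fin (m + 1) ↦ E) F).toContinuousLinearEquiv
    have hderiv : HasFDerivAt (fun y ↦ ∫ t in a..b, p y t m)
        (∫ t in a..b, curryLeft (p x t (m + 1))) x := by
      refine hasFDerivAt_intervalIntegral_of_continuousOn hU (fun y hy ↦ ?_)
        (f' := fun y t ↦ curryLeft (p y t (m + 1)))
        (curryLeft.continuous.comp_continuousOn (hcont (m + 1))) (fun y hy t ht ↦ ?_) hx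
      · exact (hcont m).comp (f := fun t ↦ (y, t)) (by fun_prop) fun t ht ↦ ⟨hy, ht⟩
      · exact ((htaylor t ht).fderivWithin m (by exact_mod_cast ENat.natCast_lt_top m)
          y hy).hasFDerivAt (hU.mem_nhds hy)
    rw [intervalIntegral_comp_continuousLinearEquiv] at hderiv
    exact hderiv.hasFDerivWithinAt

theorem contDiffOn_intervalIntegral {f : E → ℝ → F} (hU : IsOpen U)
    (hf : ContDiffOn ℝ ∞ (Function.uncurry f) (U ×ˢ uIcc a b)) :
    ContDiffOn ℝ ∞ (fun x ↦ ∫ t in a..b, f x t) U := by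
  rcases eq_or_ne a b with rfl | hab
  · simpa using contDiffOn_const
  have hp := hf.ftaylorSeriesWithin (hU.uniqueDiffOn.prod (uniqueDiffOn_Icc (inf_lt_sup.2 hab)))
  let slice (t : ℝ) : E →ᴬ[ℝ] E × ℝ := (ContinuousAffineMap.id ℝ E).prod (.const ℝ E t)
  refine (hasFTaylorSeriesUpToOn_intervalIntegral hU (fun m ↦ ?_) fun t ht ↦
    (hp.comp_continuousAffineMap (slice t)).mono fun x hx ↦ ⟨hx, ht⟩).contDiffOn
  exact (ContinuousMultilinearMap.compContinuousLinearMapL fun _ ↦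
    ContinuousLinearMap.inl ℝ E ℝ).continuous.comp_continuousOn
      (hp.cont m (by exact_mod_cast le_top))

end ParametricIntegral

theorem hasFDerivAt_curveIntegral_segment_of_starConvex {E F : Type*} [NormedAddCommGroup E]
    [NormedSpace ℝ E] [NormedAddCommGroup F] [NormedSpace ℝ F] [CompleteSpace F]
    {θ : E → E →L[ℝ] F} {s : Set E} {a b : E} (hs : StarConvex ℝ a s) (hso : IsOpen s)
    (hθ : DifferentiableOn ℝ θ s) (hdθ : ∀ x ∈ s, ∀ u v, fderiv ℝ θ x u v = fderiv ℝ θ x v u)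
    (hb : b ∈ s) : HasFDerivAt (∫ᶜ x in .segment a ·, θ x) (θ b) b := by
  -- `s` need not be convex, but it contains a thickening of the segment, which is.
  have hcompact : IsCompact (segment ℝ a b) :=
    convexHull_pair (𝕜 := ℝ) a b ▸ (Set.toFinite {a, b}).isCompact_convexHull ℝ
  obtain ⟨δ, hδ, hsub⟩ := hcompact.exists_thickening_subset_open hso (hs.segment_subset hb)
  have hseg := Metric.self_subset_thickening hδ (segment ℝ a b)
  have hopen : IsOpen (Metric.thickening δ (segment ℝ a b)) := Metric.isOpen_thickening
  have hbδ := hseg (right_mem_segment ℝ a b)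
  have hderiv : ∀ x ∈ Metric.thickening δ (segment ℝ a b),
      HasFDerivWithinAt θ (fderiv ℝ θ x) (Metric.thickening δ (segment ℝ a b)) x := fun x hx ↦
    (hθ.differentiableAt (hso.mem_nhds (hsub hx))).hasFDerivAt.hasFDerivWithinAt
  exact ((convex_segment (𝕜 := ℝ) a b).thickening δ
    |>.hasFDerivWithinAt_curveIntegral_segment_of_hasFDerivWithinAt_symmetric
      hderiv (fun x hx u _ v _ ↦ hdθ x (hsub hx) u v)
      (hseg (left_mem_segment ℝ a b)) hbδ).hasFDerivAt (hopen.mem_nhds hbδ)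

section Fiber

variable {E V G : Type*} [NormedAddCommGroup E] [NormedSpace ℝ E] [NormedAddCommGroup V]
  [NormedSpace ℝ V] [NormedAddCommGroup G] [NormedSpace ℝ G]

/-- The point obtained from `x` by moving its fibre coordinate `π x` to `y` inside the fibre
`x + range J`. The map `J` is meant to be a section of `π`; that `π ∘L J = id` is a hypothesis of
the lemmas rather than part of the data. -/
def updateFiber (J : E →L[ℝ] V) (π : V →L[ℝ] E) (x : V) (y : E) : V :=
  x + J (y - π x)

/-- The radial primitive of a family `θ` of 1-forms on the fibres `x + range J`: the integral of
`θ` along the segment from the point of the fibre with coordinate `0` to `x`. Each `θ x` is a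
functional on the coordinate space `E` of the fibre instead of on `range J`. -/
noncomputable def fiberPrimitive (J : E →L[ℝ] V) (π : V →L[ℝ] E) (θ : V → E →L[ℝ] G) (x : V) :
    G :=
  ∫ t in (0 : ℝ)..1, θ (updateFiber J π x (t • π x)) (π x)

variable {J : E →L[ℝ] V} {π : V →L[ℝ] E}

theorem updateFiber_self (x : V) : updateFiber J π x (π x) = x := by
  simp [updateFiber]

theorem map_updateFiber (hJ : π ∘L J = .id ℝ E) (x : V) (y : E) : π (updateFiber J π x y) = y := by
  have hJy : π (J (y - π x)) = y - π x := congr($hJ (y - π x))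
  rw [updateFiber, map_add, hJy, add_sub_cancel]

theorem updateFiber_updateFiber (hJ : π ∘L J = .id ℝ E) (x : V) (y z : E) :
    updateFiber J π (updateFiber J π x y) z = updateFiber J π x z := by
  rw [updateFiber, map_updateFiber hJ, updateFiber, updateFiber, add_assoc, ← map_add]
  congr 2
  abel

theorem hasFDerivAt_comp_updateFiber {f : V → G} {f' : V →L[ℝ] G} {x : V} {y : E}
    (hf : HasFDerivAt f f' (updateFiber J π x y)) :
    HasFDerivAt (fun z ↦ f (updateFiber J π x z)) (f' ∘L J) y :=
  hf.comp y ((J.hasFDerivAt.comp y ((hasFDerivAt_id y).sub_const (π x))).const_add x)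

theorem continuous_updateFiber (x : V) : Continuous (updateFiber J π x) := by
  unfold updateFiber
  fun_prop

theorem contDiff_updateFiber_smul :
    ContDiff ℝ ∞ fun z : V × ℝ ↦ updateFiber J π z.1 (z.2 • π z.1) := by
  unfold updateFiber
  fun_prop

theorem contDiffOn_fiberPrimitive {U : Set V} (hU : IsOpen U)
    (hstar : ∀ x ∈ U, ∀ t ∈ Icc (0 : ℝ) 1, updateFiber J π x (t • π x) ∈ U)
    {θ : V → E →L[ℝ] G} (hθ : ContDiffOn ℝ ∞ θ U) :
    ContDiffOn ℝ ∞ (fiberPrimitive J π θ) U := by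
  refine contDiffOn_intervalIntegral hU (.clm_apply (hθ.comp
    contDiff_updateFiber_smul.contDiffOn fun z hz ↦ ?_) (by fun_prop))
  exact hstar z.1 hz.1 z.2 (uIcc_of_le (zero_le_one' ℝ) ▸ hz.2)

theorem fiberPrimitive_updateFiber (hJ : π ∘L J = .id ℝ E) (θ : V → E →L[ℝ] G) (x : V) (y : E) :
    fiberPrimitive J π θ (updateFiber J π x y) =
      ∫ᶜ z in .segment 0 y, θ (updateFiber J π x z) := by
  simp only [fiberPrimitive, map_updateFiber hJ, updateFiber_updateFiber hJ, curveIntegral_segment,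
    AffineMap.lineMap_apply_module, smul_zero, zero_add, sub_zero]

theorem map_fiberPrimitive {F : Type*} [NormedAddCommGroup F] [NormedSpace ℝ F] [CompleteSpace F]
    [CompleteSpace G] (T : G →L[ℝ] F) {U : Set V} {θ : V → E →L[ℝ] G} (hθ : ContinuousOn θ U)
    {x : V} (hx : ∀ t ∈ Icc (0 : ℝ) 1, updateFiber J π x (t • π x) ∈ U) :
    T (fiberPrimitive J π θ x) = fiberPrimitive J π (fun y ↦ T ∘L θ y) x := by
  refine (T.intervalIntegral_comp_comm (ContinuousOn.intervalIntegrable ?_)).symm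
  refine (hθ.comp (f := fun t : ℝ ↦ updateFiber J π x (t • π x)) ?_ fun t ht ↦ ?_).clm_apply
    continuousOn_const
  · exact (contDiff_updateFiber_smul.continuous.comp (Continuous.prodMk_right x)).continuousOn
  · exact hx t (uIcc_of_le (zero_le_one' ℝ) ▸ ht)

theorem hasFDerivAt_fiberPrimitive_updateFiber [CompleteSpace G] (hJ : π ∘L J = .id ℝ E)
    {U : Set V} (hU : IsOpen U)
    (hstar : ∀ x ∈ U, ∀ t ∈ Icc (0 : ℝ) 1, updateFiber J π x (t • π x) ∈ U)
    {θ : V → E →L[ℝ] G} (hθ : DifferentiableOn ℝ θ U) {x : V} (hx : x ∈ U)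
    (hsymm : ∀ y, updateFiber J π x y ∈ U → ∀ u v,
      fderiv ℝ θ (updateFiber J π x y) (J u) v = fderiv ℝ θ (updateFiber J π x y) (J v) u) :
    HasFDerivAt (fun y ↦ fiberPrimitive J π θ (updateFiber J π x y)) (θ x) (π x) := by
  let s : Set E := updateFiber J π x ⁻¹' U
  have hs_star : StarConvex ℝ 0 s := starConvex_zero_iff.2 fun y hy t ht₀ ht₁ ↦ by
    simpa only [s, mem_preimage, map_updateFiber hJ, updateFiber_updateFiber hJ]
      using hstar _ hy t ⟨ht₀, ht₁⟩
  have hη (y : E) (hy : y ∈ s) : HasFDerivAt (fun y ↦ θ (updateFiber J π x y))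
      (fderiv ℝ θ (updateFiber J π x y) ∘L J) y :=
    hasFDerivAt_comp_updateFiber (hθ.differentiableAt (hU.mem_nhds hy)).hasFDerivAt
  have hpoincare := hasFDerivAt_curveIntegral_segment_of_starConvex hs_star
    (hU.preimage (continuous_updateFiber x))
    (fun y hy ↦ (hη y hy).differentiableAt.differentiableWithinAt)
    (fun y hy u v ↦ by simpa only [(hη y hy).fderiv] using! hsymm y hy u v)
    (b := π x) (by rwa [mem_preimage, updateFiber_self])
  simpa only [fiberPrimitive_updateFiber hJ, updateFiber_self] using hpoincare

theorem map_fderiv_fiberPrimitive [CompleteSpace G] {F : Type*} [NormedAddCommGroup F]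
    [NormedSpace ℝ F] [CompleteSpace F] (hJ : π ∘L J = .id ℝ E) (T : G →L[ℝ] F) {U : Set V}
    (hU : IsOpen U) (hstar : ∀ x ∈ U, ∀ t ∈ Icc (0 : ℝ) 1, updateFiber J π x (t • π x) ∈ U)
    {θ : V → E →L[ℝ] G} (hθ : DifferentiableOn ℝ θ U) {x : V} (hx : x ∈ U)
    (hsymm : ∀ y, updateFiber J π x y ∈ U → ∀ u v,
      T (fderiv ℝ θ (updateFiber J π x y) (J u) v) = T (fderiv ℝ θ (updateFiber J π x y) (J v) u))
    (hdiff : DifferentiableAt ℝ (fiberPrimitive J π θ) x) (e : E) :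
    T (fderiv ℝ (fiberPrimitive J π θ) x (J e)) = T (θ x e) := by
  have hTθ (y : V) (hy : y ∈ U) : HasFDerivAt (fun y ↦ T ∘L θ y)
      (ContinuousLinearMap.compL ℝ E G F T ∘L fderiv ℝ θ y) y :=
    (ContinuousLinearMap.compL ℝ E G F T).hasFDerivAt.comp y
      (hθ.differentiableAt (hU.mem_nhds hy)).hasFDerivAt
  have hprimitive : HasFDerivAt
      (fun y ↦ fiberPrimitive J π (fun z ↦ T ∘L θ z) (updateFiber J π x y)) (T ∘L θ x) (π x) :=
    hasFDerivAt_fiberPrimitive_updateFiber hJ hU hstar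
      (fun y hy ↦ (hTθ y hy).differentiableAt.differentiableWithinAt) hx
      fun y hy u v ↦ by simpa [(hTθ _ hy).fderiv] using hsymm y hy u v
  have hchain : HasFDerivAt (fun y ↦ T (fiberPrimitive J π θ (updateFiber J π x y)))
      ((T ∘L fderiv ℝ (fiberPrimitive J π θ) x) ∘L J) (π x) := by
    refine hasFDerivAt_comp_updateFiber (f := fun y ↦ T (fiberPrimitive J π θ y)) ?_
    rw [updateFiber_self]
    exact T.hasFDerivAt.comp x hdiff.hasFDerivAt
  have hxU : updateFiber J π x (π x) ∈ U := by rwa [updateFiber_self]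
  have hmap : (fun y ↦ T (fiberPrimitive J π θ (updateFiber J π x y))) =ᶠ[𝓝 (π x)]
      fun y ↦ fiberPrimitive J π (fun z ↦ T ∘L θ z) (updateFiber J π x y) := by
    filter_upwards [(continuous_updateFiber x).continuousAt.preimage_mem_nhds
      (hU.mem_nhds hxU)] with y hy
    exact map_fiberPrimitive T hθ.continuousOn (hstar _ hy)
  exact congr($((hchain.congr_of_eventuallyEq hmap.symm).unique hprimitive) e)

theorem linearMap_fderiv_fiberPrimitive [FiniteDimensional ℝ G] {F : Type*} [AddCommGroup F]
    [Module ℝ F] (hJ : π ∘L J = .id ℝ E) (S : G →ₗ[ℝ] F) {U : Set V} (hU : IsOpen U)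
    (hstar : ∀ x ∈ U, ∀ t ∈ Icc (0 : ℝ) 1, updateFiber J π x (t • π x) ∈ U)
    {θ : V → E →L[ℝ] G} (hθ : DifferentiableOn ℝ θ U) {x : V} (hx : x ∈ U)
    (hsymm : ∀ y, updateFiber J π x y ∈ U → ∀ u v,
      S (fderiv ℝ θ (updateFiber J π x y) (J u) v) = S (fderiv ℝ θ (updateFiber J π x y) (J v) u))
    (hdiff : DifferentiableAt ℝ (fiberPrimitive J π θ) x) (e : E) :
    S (fderiv ℝ (fiberPrimitive J π θ) x (J e)) = S (θ x e) := by
  have := FiniteDimensional.complete ℝ G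
  -- `F` has no topology: test the identity against linear functionals.
  rw [← sub_eq_zero, ← Module.forall_dual_apply_eq_zero_iff ℝ]
  intro φ
  rw [map_sub, sub_eq_zero]
  exact map_fderiv_fiberPrimitive hJ (φ ∘ₗ S).toContinuousLinearMap hU hstar hθ hx
    (fun y hy u v ↦ congrArg φ (hsymm y hy u v)) hdiff e

end Fiber

section CoordinateFiber

variable {ι κ : Type*} [Fintype κ] {c : κ → ι}

/-- The map from `κ → ℝ` to `ι → ℝ` which, for injective `c`, puts the `i`-th coordinate in position
`c i` and `0` in the positions outside the range of `c`. -/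
noncomputable def extendByZeroCLM (c : κ → ι) : (κ → ℝ) →L[ℝ] (ι → ℝ) :=
  (Function.ExtendByZero.linearMap ℝ c).toContinuousLinearMap

/-- The projection of `ι → ℝ` onto the coordinates listed by `c`. -/
def restrictCLM (c : κ → ι) : (ι → ℝ) →L[ℝ] (κ → ℝ) :=
  .pi fun i ↦ .proj (c i)

theorem restrictCLM_comp_extendByZeroCLM (hc : Function.Injective c) :
    restrictCLM c ∘L extendByZeroCLM c = .id ℝ (κ → ℝ) :=
  ContinuousLinearMap.ext fun y ↦ funext fun i ↦ hc.extend_apply y 0 i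

theorem extendByZeroCLM_single [DecidableEq κ] [DecidableEq ι] (hc : Function.Injective c)
    (i : κ) : extendByZeroCLM c (Pi.single i 1) = Pi.single (c i) 1 := by
  change Function.extend c (Pi.single i 1) 0 = _
  ext j
  by_cases hj : ∃ i', c i' = j
  · obtain ⟨i', rfl⟩ := hj
    simp [hc.extend_apply, Pi.single_apply, hc.eq_iff]
  · rw [Function.extend_apply' _ _ _ hj, Pi.single_eq_of_ne fun h ↦ hj ⟨i, h.symm⟩, Pi.zero_apply]

theorem updateFiber_extendByZeroCLM [Fintype ι] (hc : Function.Injective c) (x : ι → ℝ)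
    (y : κ → ℝ) :
    updateFiber (extendByZeroCLM c) (restrictCLM c) x y = Function.extend c y x := by
  ext j
  change x j + Function.extend c (y - x ∘ c) 0 j = _
  by_cases hj : ∃ i, c i = j
  · obtain ⟨i, rfl⟩ := hj
    simp [hc.extend_apply]
  · simp [Function.extend_apply' _ _ _ hj]

end CoordinateFiber

section CoefficientForm

variable {κ μ V : Type*} [Fintype κ]

/-- The 1-form `∑ i, α i dx i` in the variables indexed by `κ`, with coefficients
`α i : V → (μ → ℝ)`; only the `κ`-directions are covectors, while all of `V` is the base. -/
noncomputable def coefficientForm (α : κ → μ → V → ℝ) (x : V) : (κ → ℝ) →L[ℝ] (μ → ℝ) :=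
  (Fintype.linearCombination ℝ fun i l ↦ α i l x).toContinuousLinearMap

theorem coefficientForm_single [DecidableEq κ] (α : κ → μ → V → ℝ) (x : V) (i : κ) :
    coefficientForm α x (Pi.single i 1) = fun l ↦ α i l x := by
  simp [coefficientForm]

variable [NormedAddCommGroup V] [NormedSpace ℝ V]

theorem contDiffOn_coefficientForm [Fintype μ] {n : ℕ∞ω} {U : Set V} {α : κ → μ → V → ℝ}
    (hα : ∀ i l, ContDiffOn ℝ n (α i l) U) : ContDiffOn ℝ n (coefficientForm α) U := by
  refine contDiffOn_clm_apply.2 fun y ↦ contDiffOn_pi.2 fun l ↦ ?_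
  simpa [coefficientForm, Fintype.linearCombination_apply] using
    ContDiffOn.sum fun i _ ↦ contDiffOn_const.mul (hα i l)

theorem fderiv_coefficientForm_single [Finite μ] [DecidableEq κ] {α : κ → μ → V → ℝ} {x : V}
    (hα : DifferentiableAt ℝ (coefficientForm α) x) (u : V) (i : κ) (l : μ) :
    fderiv ℝ (coefficientForm α) x u (Pi.single i 1) l = fderiv ℝ (α i l) x u := by
  have := Fintype.ofFinite μ
  have h := hasFDerivAt_pi'.1 (hα.hasFDerivAt.clm_apply (hasFDerivAt_const (Pi.single i 1) x)) l
  simp only [coefficientForm_single] at h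
  simp [h.fderiv]

theorem linearCombination_fderiv_coefficientForm_symm [Fintype μ] [DecidableEq κ] {F : Type*}
    [AddCommGroup F] [Module ℝ F] {J : (κ → ℝ) →L[ℝ] V} {z : μ → F} {α : κ → μ → V → ℝ} {x : V}
    (hα : DifferentiableAt ℝ (coefficientForm α) x)
    (hsymm : ∀ i j, ∑ l, fderiv ℝ (α i l) x (J (Pi.single j 1)) • z l =
      ∑ l, fderiv ℝ (α j l) x (J (Pi.single i 1)) • z l) (u v : κ → ℝ) :
    Fintype.linearCombination ℝ z (fderiv ℝ (coefficientForm α) x (J u) v) =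
      Fintype.linearCombination ℝ z (fderiv ℝ (coefficientForm α) x (J v) u) := by
  let B : (κ → ℝ) →ₗ[ℝ] (κ → ℝ) →ₗ[ℝ] F :=
    (fderiv ℝ (coefficientForm α) x ∘L J).toLinearMap₁₂.compr₂ (Fintype.linearCombination ℝ z)
  have hB : B = B.flip := by
    refine LinearMap.ext_basis (Pi.basisFun ℝ κ) (Pi.basisFun ℝ κ) fun i j ↦ ?_
    simpa [B, Fintype.linearCombination_apply, fderiv_coefficientForm_single hα] using hsymm j i
  exact congr($hB u v)

end CoefficientForm

theorem extend_smul_mem_pi {ι κ : Type*} {c : κ → ι} (hc : Function.Injective c) {I : ι → Set ℝ}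
    (hI : ∀ i, StarConvex ℝ 0 (I (c i))) {x : ι → ℝ} (hx : x ∈ univ.pi I) {t : ℝ}
    (ht : t ∈ Icc (0 : ℝ) 1) : Function.extend c (t • x ∘ c) x ∈ univ.pi I := by
  intro j _
  by_cases hj : ∃ i, c i = j
  · obtain ⟨i, rfl⟩ := hj
    rw [hc.extend_apply]
    exact starConvex_zero_iff.1 (hI i) (hx (c i) trivial) ht.1 ht.2
  · rw [Function.extend_apply' _ _ _ hj]
    exact hx j trivial

theorem exists_potential_for_compatible_coefficients_general {ι κ μ F : Type*} [Fintype ι]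
    [DecidableEq ι] [Finite κ] [Fintype μ] [AddCommGroup F] [Module ℝ F]
    {c : κ → ι} (hc : Function.Injective c) {U : Set (ι → ℝ)} (hU : IsOpen U)
    (hstar : ∀ x ∈ U, ∀ t ∈ Icc (0 : ℝ) 1, Function.extend c (t • x ∘ c) x ∈ U)
    {Z : μ → (ι → ℝ) → F}
    (hZ : ∀ l, ∀ x ∈ U, ∀ y ∈ U, (∀ i ∉ range c, x i = y i) → Z l x = Z l y)
    {α : κ → μ → (ι → ℝ) → ℝ} (hα : ∀ i l, ContDiffOn ℝ ∞ (α i l) U)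
    (hcompat : ∀ x ∈ U, ∀ i j,
      ∑ l, fderivWithin ℝ (α i l) U x (Pi.single (c j) 1) • Z l x =
      ∑ l, fderivWithin ℝ (α j l) U x (Pi.single (c i) 1) • Z l x) :
    ∃ β : μ → (ι → ℝ) → ℝ, (∀ l, ContDiffOn ℝ ∞ (β l) U) ∧
      ∀ x ∈ U, ∀ i, ∑ l, fderivWithin ℝ (β l) U x (Pi.single (c i) 1) • Z l x =
        ∑ l, α i l x • Z l x := by
  classical
  have := Fintype.ofFinite κ
  let J := extendByZeroCLM c
  let π := restrictCLM c
  have hJ : π ∘L J = .id ℝ (κ → ℝ) := restrictCLM_comp_extendByZeroCLM hc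
  have hstar_fiber : ∀ x ∈ U, ∀ t ∈ Icc (0 : ℝ) 1, updateFiber J π x (t • π x) ∈ U :=
    fun x hx t ht ↦ (updateFiber_extendByZeroCLM hc x _).symm ▸ hstar x hx t ht
  have hθ : ContDiffOn ℝ ∞ (coefficientForm α) U := contDiffOn_coefficientForm hα
  have hΦ := contDiffOn_fiberPrimitive hU hstar_fiber hθ
  refine ⟨fun l x ↦ fiberPrimitive J π (coefficientForm α) x l, contDiffOn_pi.1 hΦ,
    fun x hx i ↦ ?_⟩
  have hΦx : DifferentiableAt ℝ (fiberPrimitive J π (coefficientForm α)) x :=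
    (hΦ.differentiableOn (by simp)).differentiableAt (hU.mem_nhds hx)
  have hsymm (y : κ → ℝ) (hy : updateFiber J π x y ∈ U) := by
    refine linearCombination_fderiv_coefficientForm_symm (J := J) (z := fun l ↦ Z l x)
      ((hθ.differentiableOn (by simp)).differentiableAt (hU.mem_nhds hy)) fun i j ↦ ?_
    have hZx (l : μ) : Z l (updateFiber J π x y) = Z l x := hZ l _ hy x hx fun j hj ↦ by
      rw [updateFiber_extendByZeroCLM hc, Function.extend_apply' _ _ _ hj]
    simpa only [J, extendByZeroCLM_single hc, hZx, fderivWithin_of_isOpen hU hy] using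
      hcompat _ hy i j
  have hΦ_deriv := linearMap_fderiv_fiberPrimitive hJ _ hU hstar_fiber
    (hθ.differentiableOn (by simp)) hx hsymm hΦx (Pi.single i 1)
  simpa [J, extendByZeroCLM_single hc, Fintype.linearCombination_apply, coefficientForm_single,
    fderivWithin_of_isOpen hU hx, fderiv_apply hΦx] using hΦ_deriv

theorem exists_potential_for_compatible_coefficients
    (n k m : ℕ) (hk1 : 1 ≤ k) (hkn : k ≤ n) (hm : 1 ≤ m)
    (I : Fin n → Set ℝ) (hIopen : ∀ i, IsOpen (I i)) (hIconv : ∀ i, Convex ℝ (I i))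
    (hI0 : ∀ i : Fin n, (i : ℕ) < k → (0 : ℝ) ∈ I i)
    (U : Set (Fin n → ℝ)) (hU : U = Set.pi Set.univ I)
    (Z : Fin m → (Fin n → ℝ) → (Fin (n - k) → ℝ))
    (hZsmooth : ∀ l, ContDiffOn ℝ (⊤ : ℕ∞) (Z l) U)
    (hZdep : ∀ l, ∀ x ∈ U, ∀ y ∈ U, (∀ i : Fin n, k ≤ (i : ℕ) → x i = y i) → Z l x = Z l y)
    (α : Fin k → Fin m → (Fin n → ℝ) → ℝ)
    (hα : ∀ i l, ContDiffOn ℝ (⊤ : ℕ∞) (α i l) U)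
    (hcompat : ∀ x ∈ U, ∀ i j : Fin k,
      ∑ l, (fderivWithin ℝ (α i l) U x (Pi.single (Fin.castLE hkn j) 1)) • Z l x =
      ∑ l, (fderivWithin ℝ (α j l) U x (Pi.single (Fin.castLE hkn i) 1)) • Z l x) :
    ∃ β : Fin m → (Fin n → ℝ) → ℝ,
      (∀ j, ContDiffOn ℝ (⊤ : ℕ∞) (β j) U) ∧
      ∀ x ∈ U, ∀ i : Fin k,
        ∑ j, (fderivWithin ℝ (β j) U x (Pi.single (Fin.castLE hkn i) 1)) • Z j x =
        ∑ j, α i j x • Z j x := by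
  subst hU
  have hc := Fin.castLE_injective hkn
  have hI (i : Fin k) : StarConvex ℝ 0 (I (Fin.castLE hkn i)) :=
    (hIconv _).starConvex (hI0 _ i.isLt)
  exact exists_potential_for_compatible_coefficients_general hc
    (isOpen_set_pi finite_univ fun i _ ↦ hIopen i) (fun x hx t ht ↦ extend_smul_mem_pi hc hI hx ht)
    (fun l x hx y hy hxy ↦ hZdep l x hx y hy fun i hi ↦ hxy i (by simpa using hi)) hα hcompat
end
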